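/- arXiv:2110.10097 — 2 statements merged into one kernel-verified Lean document; each statement's English description precedes it below -/
import Mathlib

section
/- Assume α₁ − α₂α₃ + α₃² ≠ 0. Then the pair (A, C) of the mixed-traffic system is observable, i.e. the observability matrix col(C, CA, CA², …, CA^{2n−1}) ∈ ℝ^{2n(n+m)×2n} has rank 2n. -/
open Matrix

/-- The controllability matrix `[B, AB, …, A^{N−1}B]` of a pair `(A, B)`. -/
noncomputable def ctrbMat {N p : ℕ} (A : Matrix (Fin N) (Fin N) ℝ)
    (B : Matrix (Fin N) (Fin p) ℝ) : Matrix (Fin N) (Fin N × Fin p) ℝ :=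
  Matrix.of fun r kj => (A ^ (kj.1 : ℕ) * B) r kj.2

/-- The observability matrix `col(C, CA, …, CA^{N−1})` of a pair `(A, C)`. -/
noncomputable def obsvMat {N p : ℕ} (A : Matrix (Fin N) (Fin N) ℝ)
    (C : Matrix (Fin p) (Fin N) ℝ) : Matrix (Fin N × Fin p) (Fin N) ℝ :=
  Matrix.of fun kj c => (C * A ^ (kj.1 : ℕ)) kj.2 c

noncomputable def matP1 (α1 α2 : ℝ) : Matrix (Fin 2) (Fin 2) ℝ := !![0, -1; α1, -α2]
noncomputable def matP2 (α3 : ℝ) : Matrix (Fin 2) (Fin 2) ℝ := !![0, 1; 0, α3]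
noncomputable def matS1 : Matrix (Fin 2) (Fin 2) ℝ := !![(0:ℝ), -1; 0, 0]
noncomputable def matS2 : Matrix (Fin 2) (Fin 2) ℝ := !![(0:ℝ), 1; 0, 0]

def fin2 (k : ℕ) : Fin 2 := ⟨k % 2, Nat.mod_lt _ (by norm_num)⟩

/-- The mixed-traffic system matrix `A ∈ ℝ^{2n×2n}` (vehicles 0-indexed `0,…,n−1`;
the CAV locations are given by the strictly increasing map `ι : Fin m → Fin n`).
Block `(i,i)` is `S₁` if vehicle `i` is a CAV, `P₁` otherwise; block `(i,i−1)` is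
`S₂` if vehicle `i` is a CAV, `P₂` otherwise; all other blocks vanish. -/
noncomputable def trafficA (n m : ℕ) (ι : Fin m → Fin n) (α1 α2 α3 : ℝ) :
    Matrix (Fin (2 * n)) (Fin (2 * n)) ℝ :=
  Matrix.of fun r c =>
    if (r : ℕ) / 2 = (c : ℕ) / 2 then
      (if ∃ k, (ι k : ℕ) = (r : ℕ) / 2 then matS1 (fin2 r) (fin2 c)
       else matP1 α1 α2 (fin2 r) (fin2 c))
    else if (r : ℕ) / 2 = (c : ℕ) / 2 + 1 then
      (if ∃ k, (ι k : ℕ) = (r : ℕ) / 2 then matS2 (fin2 r) (fin2 c)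
       else matP2 α3 (fin2 r) (fin2 c))
    else 0

/-- The input matrix `B ∈ ℝ^{2n×m}`: the `k`-th column is the standard basis
vector whose nonzero entry sits at the (0-indexed) position `2·ι(k)+1`,
i.e. the velocity component of the `k`-th CAV. -/
noncomputable def trafficB (n m : ℕ) (ι : Fin m → Fin n) :
    Matrix (Fin (2 * n)) (Fin m) ℝ :=
  Matrix.of fun r k => if (r : ℕ) = 2 * (ι k : ℕ) + 1 then 1 else 0

/-- The output matrix `C ∈ ℝ^{(n+m)×2n}`: the first `n` rows pick out the velocity
errors of all vehicles, the last `m` rows pick out the spacing errors of the CAVs. -/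
noncomputable def trafficC (n m : ℕ) (ι : Fin m → Fin n) :
    Matrix (Fin (n + m)) (Fin (2 * n)) ℝ :=
  Matrix.of fun j c =>
    if h : (j : ℕ) < n then (if (c : ℕ) = 2 * (j : ℕ) + 1 then 1 else 0)
    else (if (c : ℕ) = 2 * (ι ⟨(j : ℕ) - n, by have := j.isLt; omega⟩ : ℕ) then 1 else 0)

/-!
The rank of the observability matrix is full exactly when no nonzero state `v` has `C Aᵏ v = 0` for
all `k < 2n`, and here `k = 0, 1` already exclude such a state. From `C v = 0` all velocities and
all CAV spacings of `v` vanish. With the velocities gone, the velocity component of `A v` at a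
human-driven vehicle is `α₁` times its spacing, so `C A v = 0` removes the remaining spacings.
-/

theorem rank_eq_card_iff_mulVec_eq_zero {K l o : Type*} [Field K] [Fintype o] (M : Matrix l o K) :
    M.rank = Fintype.card o ↔ ∀ v, M *ᵥ v = 0 → v = 0 := by
  have rank_nullity := M.mulVecLin.finrank_range_add_finrank_ker
  rw [Module.finrank_fintype_fun_eq_card] at rank_nullity
  rw [← ker_mulVecLin_eq_bot_iff, ← Submodule.finrank_eq_zero, rank]
  omega

theorem obsvMat_mulVec_apply {N p : ℕ} (A : Matrix (Fin N) (Fin N) ℝ) (C : Matrix (Fin p) (Fin N) ℝ)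
    (v : Fin N → ℝ) (k : Fin N) (j : Fin p) :
    (obsvMat A C *ᵥ v) (k, j) = (C *ᵥ (A ^ (k : ℕ) *ᵥ v)) j := by
  rw [mulVec_mulVec]
  rfl

theorem rank_obsvMat_eq_iff {N p : ℕ} (A : Matrix (Fin N) (Fin N) ℝ)
    (C : Matrix (Fin p) (Fin N) ℝ) :
    (obsvMat A C).rank = N ↔ ∀ v, (∀ k < N, C *ᵥ (A ^ k *ᵥ v) = 0) → v = 0 := by
  have obsvMat_mulVec_eq_zero (v : Fin N → ℝ) :
      obsvMat A C *ᵥ v = 0 ↔ ∀ k < N, C *ᵥ (A ^ k *ᵥ v) = 0 := by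
    simp only [funext_iff, Prod.forall, obsvMat_mulVec_apply, Pi.zero_apply, Fin.forall_iff]
  simpa only [Fintype.card_fin, obsvMat_mulVec_eq_zero] using
    rank_eq_card_iff_mulVec_eq_zero (obsvMat A C)

section MixedTraffic

variable {n m : ℕ}

/-- The position of the spacing error of vehicle `i` in the state vector; as everywhere here,
vehicles and positions are counted from `0`. -/
def spacingIndex (i : Fin n) : Fin (2 * n) := ⟨2 * i, by omega⟩

/-- The position of the velocity error of vehicle `i` in the state vector. -/
def velocityIndex (i : Fin n) : Fin (2 * n) := ⟨2 * i + 1, by omega⟩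

theorem exists_eq_spacingIndex_or_eq_velocityIndex (c : Fin (2 * n)) :
    ∃ i, c = spacingIndex i ∨ c = velocityIndex i := by
  refine ⟨⟨c / 2, by omega⟩, ?_⟩
  simp only [spacingIndex, velocityIndex, Fin.ext_iff]
  omega

variable (ι : Fin m → Fin n)

theorem trafficC_castAdd (i : Fin n) :
    trafficC n m ι (Fin.castAdd m i) = Pi.single (velocityIndex i) 1 := by
  ext c
  simp [trafficC, velocityIndex, Pi.single_apply, Fin.ext_iff]

theorem trafficC_natAdd (k : Fin m) :
    trafficC n m ι (Fin.natAdd n k) = Pi.single (spacingIndex (ι k)) 1 := by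
  ext c
  simp [trafficC, spacingIndex, Pi.single_apply, Fin.ext_iff]

theorem trafficC_mulVec_eq_zero_iff (v : Fin (2 * n) → ℝ) :
    trafficC n m ι *ᵥ v = 0 ↔
      (∀ i, v (velocityIndex i) = 0) ∧ ∀ k, v (spacingIndex (ι k)) = 0 := by
  simp only [funext_iff, Fin.forall_fin_add, mulVec, trafficC_castAdd, trafficC_natAdd,
    single_one_dotProduct, Pi.zero_apply]

variable {ι} {i : Fin n} (α1 α2 α3 : ℝ)

theorem trafficA_velocityIndex_spacingIndex (hi : i ∉ Set.range ι) (j : Fin n) :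
    trafficA n m ι α1 α2 α3 (velocityIndex i) (spacingIndex j) = if i = j then α1 else 0 := by
  have row_odd : fin2 (2 * i + 1) = 1 := by simp [fin2]
  have col_even : fin2 (2 * j) = 0 := by simp [fin2]
  have row_block : (2 * (i : ℕ) + 1) / 2 = i := by omega
  have col_block : 2 * (j : ℕ) / 2 = j := by omega
  have not_cav : ¬∃ k, (ι k : ℕ) = i := by simpa [Fin.ext_iff] using hi
  simp [trafficA, velocityIndex, spacingIndex, row_odd, col_even, row_block, col_block, not_cav,
    matP1, matP2, Fin.ext_iff]

theorem trafficA_mulVec_velocityIndex {v : Fin (2 * n) → ℝ} (hi : i ∉ Set.range ι)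
    (hv : ∀ j, v (velocityIndex j) = 0) :
    (trafficA n m ι α1 α2 α3 *ᵥ v) (velocityIndex i) = α1 * v (spacingIndex i) := by
  rw [mulVec, dotProduct, Fintype.sum_eq_single (spacingIndex i),
    trafficA_velocityIndex_spacingIndex α1 α2 α3 hi, if_pos rfl]
  intro c hc
  obtain ⟨j, rfl | rfl⟩ := exists_eq_spacingIndex_or_eq_velocityIndex c
  · have hij : i ≠ j := fun h => hc (congrArg spacingIndex h.symm)
    rw [trafficA_velocityIndex_spacingIndex α1 α2 α3 hi, if_neg hij, zero_mul]
  · rw [hv, mul_zero]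

variable {α1}

theorem eq_zero_of_trafficC_mulVec_eq_zero (hα1 : α1 ≠ 0) {v : Fin (2 * n) → ℝ}
    (hC : trafficC n m ι *ᵥ v = 0)
    (hCA : trafficC n m ι *ᵥ (trafficA n m ι α1 α2 α3 *ᵥ v) = 0) : v = 0 := by
  obtain ⟨velocity, cav_spacing⟩ := (trafficC_mulVec_eq_zero_iff ι v).mp hC
  obtain ⟨acceleration, -⟩ := (trafficC_mulVec_eq_zero_iff ι _).mp hCA
  have spacing (i : Fin n) : v (spacingIndex i) = 0 := by
    by_cases hi : i ∈ Set.range ι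
    · obtain ⟨k, rfl⟩ := hi
      exact cav_spacing k
    · have h := acceleration i
      rw [trafficA_mulVec_velocityIndex α1 α2 α3 hi velocity] at h
      exact (mul_eq_zero.mp h).resolve_left hα1
  ext c
  obtain ⟨i, rfl | rfl⟩ := exists_eq_spacingIndex_or_eq_velocityIndex c
  exacts [spacing i, velocity i]

end MixedTraffic

theorem mixed_traffic_observable_general (n m : ℕ) (ι : Fin m → Fin n) (α1 α2 α3 : ℝ)
    (hα1 : α1 ≠ 0) :
    (obsvMat (trafficA n m ι α1 α2 α3) (trafficC n m ι)).rank = 2 * n := by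
  refine (rank_obsvMat_eq_iff _ _).mpr fun v unobservable => ?_
  obtain rfl | hn := n.eq_zero_or_pos
  · exact funext fun c => c.elim0
  · have hC := unobservable 0 (by omega)
    have hCA := unobservable 1 (by omega)
    rw [pow_zero, one_mulVec] at hC
    rw [pow_one] at hCA
    exact eq_zero_of_trafficC_mulVec_eq_zero α2 α3 hα1 hC hCA

/-- **Theorem 2 (Observability).** If `α₁ − α₂α₃ + α₃² ≠ 0`, the mixed-traffic pair
`(A, C)` is observable: the observability matrix `col(C, CA, …, CA^{2n−1})`
has rank `2n`. -/
theorem mixed_traffic_observable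
    (n m : ℕ) (hn : 1 ≤ n) (hm : 1 ≤ m) (hmn : m ≤ n)
    (ι : Fin m → Fin n) (hmono : StrictMono ι)
    (α1 α2 α3 : ℝ) (hα1 : 0 < α1) (hα3 : 0 < α3) (hα23 : α3 < α2)
    (hcond : α1 - α2 * α3 + α3 ^ 2 ≠ 0) :
    (obsvMat (trafficA n m ι α1 α2 α3) (trafficC n m ι)).rank = 2 * n := by
  exact mixed_traffic_observable_general n m ι α1 α2 α3 hα1.ne'
end

section
/- Assume α₁ − α₂α₃ + α₃² ≠ 0. Let B̂ = [H, B] ∈ ℝ^{2n×(m+1)} be the combined input matrix obtained by adjoining the disturbance vector H as a first column to B. Then the pair (A, B̂) is controllable (the controllability matrix [B̂, AB̂, …, A^{2n−1}B̂] has rank 2n) and the pair (A, C) is observable (the observability matrix col(C, CA, …, CA^{2n−1}) has rank 2n). -/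
open Matrix

/-- The combined input matrix `B̂ = [H, B] ∈ ℝ^{2n×(m+1)}`, obtained by adjoining the
disturbance vector `H = (1, α₃, 0, …, 0)ᵀ` as a first column of `B`. -/
noncomputable def trafficBhat (n m : ℕ) (ι : Fin m → Fin n) (α3 : ℝ) :
    Matrix (Fin (2 * n)) (Fin (m + 1)) ℝ :=
  Matrix.of fun r k =>
    if hk : (k : ℕ) = 0 then
      (if (r : ℕ) = 0 then 1 else if (r : ℕ) = 1 then α3 else 0)
    else
      (if (r : ℕ) = 2 * (ι ⟨(k : ℕ) - 1, by have := k.isLt; omega⟩ : ℕ) + 1 then 1 else 0)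

/-!
By the Popov–Belevitch–Hautus test, `(A, B̂)` is controllable as soon as no nonzero complex row
vector `w` satisfies both `w A = μ w` and `w B̂ = 0`. If `w B = 0`, then `w` vanishes at the
velocity coordinates of the CAVs. The rows of `A` at those coordinates then do not contribute to
`w A`, so every CAV may be replaced by a human-driven vehicle. There remains a homogeneous chain
driven by `H`, in which the spacing and velocity components `aᵢ`, `bᵢ` of `w` satisfy
`(α₁ + α₃ μ) bᵢ = μ (aᵢ + α₃ bᵢ)`.

* If `α₁ + α₃ μ ≠ 0`, the condition `a₀ + α₃ b₀ = 0` coming from `w H = 0` propagates down the chain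
  and kills all components in turn.
* If `α₁ + α₃ μ = 0`, then `μ ≠ 0`, so `aᵢ + α₃ bᵢ = 0` at every vehicle. What is left is
  `(μ + α₂ - α₃) bᵢ = 0`, and `α₃ (μ + α₂ - α₃) = -(α₁ - α₂ α₃ + α₃²)` is nonzero.

For observability, `C x` shows all velocities and the spacings of the CAVs, and the accelerations
in `C A x` then show the spacings of the human-driven vehicles.
-/

section Hautus

theorem exists_hasEigenvector_mem {K V : Type*} [Field K] [IsAlgClosed K] [AddCommGroup V]
    [Module K V] [FiniteDimensional K V] {T : Module.End K V} {U : Submodule K V}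
    (hU : U ≠ ⊥) (hT : ∀ u ∈ U, T u ∈ U) : ∃ μ, ∃ u ∈ U, T.HasEigenvector μ u := by
  have : Nontrivial U := Submodule.nontrivial_iff_ne_bot.mpr hU
  obtain ⟨μ, hμ⟩ := Module.End.exists_eigenvalue (T.restrict hT)
  obtain ⟨u, hu⟩ := hμ.exists_hasEigenvector
  refine ⟨μ, u, u.2, Module.End.mem_eigenspace_iff.mpr ?_, fun h => hu.2 (Subtype.ext h)⟩
  exact congrArg Subtype.val hu.apply_eq_smul

theorem rank_eq_card_of_vecMul_eq_zero {K m n : Type*} [Field K] [Fintype m] [Fintype n]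
    {M : Matrix m n K} (h : ∀ w, w ᵥ* M = 0 → w = 0) : M.rank = Fintype.card m := by
  have hinj : Function.Injective M.vecMulLinear := (injective_iff_map_eq_zero _).mpr h
  exact (vecMul_injective_iff.mp hinj).rank_matrix

variable {R n p : Type*} [CommRing R] [Fintype n] [DecidableEq n]

/-- The uncontrollable submodule of a pair `(A, B)`: the row vectors annihilated by all the
products `A ^ k * B`. It is the orthogonal complement of the reachable subspace. -/
def uncontrollableSubmodule (A : Matrix n n R) (B : Matrix n p R) : Submodule R (n → R) :=
  ⨅ k : ℕ, LinearMap.ker (A ^ k * B).vecMulLinear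

theorem mem_uncontrollableSubmodule {A : Matrix n n R} {B : Matrix n p R} {w : n → R} :
    w ∈ uncontrollableSubmodule A B ↔ ∀ k, w ᵥ* (A ^ k * B) = 0 := by
  simp [uncontrollableSubmodule]

theorem vecMul_eq_zero_of_mem_uncontrollableSubmodule {A : Matrix n n R} {B : Matrix n p R}
    {w : n → R} (hw : w ∈ uncontrollableSubmodule A B) : w ᵥ* B = 0 := by
  simpa using mem_uncontrollableSubmodule.mp hw 0

theorem vecMul_mem_uncontrollableSubmodule {A : Matrix n n R} {B : Matrix n p R} {w : n → R}
    (hw : w ∈ uncontrollableSubmodule A B) : w ᵥ* A ∈ uncontrollableSubmodule A B := by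
  refine mem_uncontrollableSubmodule.mpr fun k => ?_
  rw [vecMul_vecMul, ← Matrix.mul_assoc, ← pow_succ']
  exact mem_uncontrollableSubmodule.mp hw (k + 1)

theorem comp_mem_uncontrollableSubmodule_map {S : Type*} [CommRing S] (f : R →+* S)
    {A : Matrix n n R} {B : Matrix n p R} {w : n → R} (hw : w ∈ uncontrollableSubmodule A B) :
    f ∘ w ∈ uncontrollableSubmodule (A.map f) (B.map f) := by
  refine mem_uncontrollableSubmodule.mpr fun k => funext fun j => ?_
  rw [← Matrix.map_pow, ← Matrix.map_mul, ← RingHom.map_vecMul,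
    mem_uncontrollableSubmodule.mp hw k, Pi.zero_apply, Pi.zero_apply, map_zero]

-- By Cayley–Hamilton, `A ^ k` is a combination of the powers below the dimension.
theorem mem_uncontrollableSubmodule_of_forall_lt_card [Nontrivial R] {A : Matrix n n R}
    {B : Matrix n p R} {w : n → R} (hw : ∀ k < Fintype.card n, w ᵥ* (A ^ k * B) = 0) :
    w ∈ uncontrollableSubmodule A B := by
  refine mem_uncontrollableSubmodule.mpr fun k => ?_
  cases isEmpty_or_nonempty n
  · simp [Subsingleton.elim w 0]
  have hdeg : (Polynomial.X ^ k %ₘ A.charpoly).natDegree < Fintype.card n := by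
    rw [← A.charpoly_natDegree_eq_dim]
    refine Polynomial.natDegree_modByMonic_lt _ A.charpoly_monic fun h => ?_
    exact Fintype.card_ne_zero (α := n) (by rw [← A.charpoly_natDegree_eq_dim, h]; simp)
  rw [pow_eq_aeval_mod_charpoly, Polynomial.aeval_eq_sum_range' hdeg, Matrix.sum_mul, vecMul_sum]
  refine Finset.sum_eq_zero fun j hj => ?_
  rw [Matrix.smul_mul, vecMul_smul, hw j (Finset.mem_range.mp hj), smul_zero]

theorem uncontrollableSubmodule_eq_bot_of_hautus {K : Type*} [Field K] [IsAlgClosed K]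
    {A : Matrix n n K} {B : Matrix n p K}
    (h : ∀ (μ : K) (w : n → K), w ᵥ* A = μ • w → w ᵥ* B = 0 → w = 0) :
    uncontrollableSubmodule A B = ⊥ := by
  by_contra hU
  obtain ⟨μ, w, hwU, hw⟩ := exists_hasEigenvector_mem (T := A.vecMulLinear) hU
    fun _ => vecMul_mem_uncontrollableSubmodule
  exact hw.2 (h μ w hw.apply_eq_smul (vecMul_eq_zero_of_mem_uncontrollableSubmodule hwU))

theorem rank_ctrbMat_of_uncontrollableSubmodule_eq_bot {N p : ℕ} {A : Matrix (Fin N) (Fin N) ℝ}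
    {B : Matrix (Fin N) (Fin p) ℝ} (h : uncontrollableSubmodule A B = ⊥) :
    (ctrbMat A B).rank = N := by
  refine (rank_eq_card_of_vecMul_eq_zero fun w hw => ?_).trans (Fintype.card_fin N)
  rw [← Submodule.mem_bot ℝ, ← h]
  refine mem_uncontrollableSubmodule_of_forall_lt_card fun k hk => funext fun j => ?_
  exact congrFun hw (⟨k, by simpa using hk⟩, j)

theorem rank_ctrbMat_of_hautus {N p : ℕ} {A : Matrix (Fin N) (Fin N) ℝ}
    {B : Matrix (Fin N) (Fin p) ℝ}
    (h : ∀ (μ : ℂ) (w : Fin N → ℂ), w ᵥ* A.map Complex.ofRealHom = μ • w →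
      w ᵥ* B.map Complex.ofRealHom = 0 → w = 0) : (ctrbMat A B).rank = N := by
  refine rank_ctrbMat_of_uncontrollableSubmodule_eq_bot <|
    (Submodule.eq_bot_iff _).mpr fun w hw => ?_
  have hwℂ := comp_mem_uncontrollableSubmodule_map Complex.ofRealHom hw
  rw [uncontrollableSubmodule_eq_bot_of_hautus h, Submodule.mem_bot] at hwℂ
  exact funext fun r => Complex.ofReal_injective (congrFun hwℂ r)

theorem rank_obsvMat_of_mulVec_pow_eq_zero {N p : ℕ} {A : Matrix (Fin N) (Fin N) ℝ}
    {C : Matrix (Fin p) (Fin N) ℝ}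
    (h : ∀ x, (∀ k < N, C *ᵥ (A ^ k *ᵥ x) = 0) → x = 0) : (obsvMat A C).rank = N := by
  rw [← rank_transpose]
  refine (rank_eq_card_of_vecMul_eq_zero fun x hx => ?_).trans (Fintype.card_fin N)
  rw [vecMul_transpose] at hx
  refine h x fun k hk => funext fun j => ?_
  rw [mulVec_mulVec]
  exact congrFun hx (⟨k, hk⟩, j)

end Hautus

section Chain

variable {R : Type*} [CommRing R] {n : ℕ} {α1 α2 α3 μ : R} {a b : ℕ → R}

/-- The scalar form of `w A = μ w`, `w H = 0` for a chain of `n` human-driven vehicles, where `a i`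
and `b i` are the spacing and velocity components of the row vector `w` at vehicle `i`. The
sequences are indexed by `ℕ`; as there is no vehicle `n`, what it would contribute is zero. -/
structure IsChainMode (n : ℕ) (α1 α2 α3 μ : R) (a b : ℕ → R) : Prop where
  head : a 0 + α3 * b 0 = 0
  spacing : ∀ i < n, α1 * b i = μ * a i
  velocity : ∀ i < n, a (i + 1) + α3 * b (i + 1) - a i - α2 * b i = μ * b i
  tail : a n + α3 * b n = 0

namespace IsChainMode

theorem mul_velocity_eq (h : IsChainMode n α1 α2 α3 μ a b) {i : ℕ} (hi : i < n) :
    (α1 + α3 * μ) * b i = μ * (a i + α3 * b i) := by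
  linear_combination h.spacing i hi

variable [NoZeroDivisors R]

theorem eq_zero_of_add_mul_ne_zero (h : IsChainMode n α1 α2 α3 μ a b) (hμ : α1 + α3 * μ ≠ 0) :
    ∀ i < n, a i = 0 ∧ b i = 0 := by
  have eq_zero_of_input {i : ℕ} (hi : i < n) (hin : a i + α3 * b i = 0) : a i = 0 ∧ b i = 0 := by
    have hb : b i = 0 := by simpa [hin, hμ] using h.mul_velocity_eq hi
    exact ⟨by simpa [hb] using hin, hb⟩
  intro i hi
  induction i with
  | zero => exact eq_zero_of_input hi h.head
  | succ i ih =>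
    obtain ⟨ha, hb⟩ := ih (by omega)
    exact eq_zero_of_input hi (by simpa [ha, hb] using h.velocity i (by omega))

theorem eq_zero_of_add_mul_eq_zero (h : IsChainMode n α1 α2 α3 μ a b) (hα1 : α1 ≠ 0)
    (hcond : α1 - α2 * α3 + α3 ^ 2 ≠ 0) (hμ : α1 + α3 * μ = 0) :
    ∀ i < n, a i = 0 ∧ b i = 0 := by
  have hμ0 : μ ≠ 0 := by
    rintro rfl
    simp [hα1] at hμ
  have input_eq_zero : ∀ i ≤ n, a i + α3 * b i = 0 := by
    intro i hi
    rcases hi.eq_or_lt with rfl | hi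
    · exact h.tail
    · simpa [hμ, hμ0] using (h.mul_velocity_eq hi).symm
  intro i hi
  have hin := input_eq_zero i hi.le
  have hb : (α1 - α2 * α3 + α3 ^ 2) * b i = 0 := by
    linear_combination α3 * h.velocity i hi - α3 * input_eq_zero (i + 1) hi + α3 * hin + b i * hμ
  replace hb : b i = 0 := (mul_eq_zero.mp hb).resolve_left hcond
  exact ⟨by simpa [hb] using hin, hb⟩

theorem eq_zero (h : IsChainMode n α1 α2 α3 μ a b) (hα1 : α1 ≠ 0)
    (hcond : α1 - α2 * α3 + α3 ^ 2 ≠ 0) : ∀ i < n, a i = 0 ∧ b i = 0 := by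
  by_cases hμ : α1 + α3 * μ = 0
  · exact h.eq_zero_of_add_mul_eq_zero hα1 hcond hμ
  · exact h.eq_zero_of_add_mul_ne_zero hμ

end IsChainMode

end Chain

section ZeroExtend

variable {R : Type*} {N : ℕ}

/-- Extension by zero of a finite vector to a sequence. It lets the last vehicle of a chain refer
to the coordinates of a follower that does not exist. -/
noncomputable def zeroExtend [Zero R] (w : Fin N → R) : ℕ → R :=
  Function.extend Fin.val w 0

theorem zeroExtend_val [Zero R] (w : Fin N → R) (r : Fin N) : zeroExtend w r = w r :=
  Fin.val_injective.extend_apply w 0 r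

theorem zeroExtend_of_le [Zero R] (w : Fin N → R) {k : ℕ} (hk : N ≤ k) : zeroExtend w k = 0 :=
  Function.extend_apply' _ _ _ fun ⟨r, hr⟩ => (hr ▸ hk).not_gt r.isLt

theorem sum_mul_ite_val_eq [NonUnitalNonAssocSemiring R] (w : Fin N → R) (k : ℕ) (x : R) :
    ∑ r, w r * (if (r : ℕ) = k then x else 0) = zeroExtend w k * x := by
  rcases lt_or_ge k N with hk | hk
  · rw [Fintype.sum_eq_single ⟨k, hk⟩ fun r hr => by rw [if_neg (Fin.val_ne_of_ne hr), mul_zero],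
      if_pos rfl, ← zeroExtend_val w ⟨k, hk⟩]
  · rw [zeroExtend_of_le w hk, zero_mul]
    exact Finset.sum_eq_zero fun r _ => by rw [if_neg (by omega), mul_zero]

end ZeroExtend

section Traffic

variable {n m : ℕ} {ι : Fin m → Fin n} {α1 α2 α3 : ℝ}

/-- The position of the spacing coordinate of vehicle `i` in the state vector. -/
def spacingIdx (i : Fin n) : Fin (2 * n) := ⟨2 * i, by omega⟩

/-- The position of the velocity coordinate of vehicle `i` in the state vector. -/
def velocityIdx (i : Fin n) : Fin (2 * n) := ⟨2 * i + 1, by omega⟩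

/-- Vehicle `i` (0-indexed, possibly beyond the end of the chain) is one of the CAVs. -/
abbrev IsCAV (ι : Fin m → Fin n) (i : ℕ) : Prop := ∃ k, (ι k : ℕ) = i

theorem spacingIdx_velocityIdx_cases {motive : Fin (2 * n) → Prop}
    (spacing : ∀ i, motive (spacingIdx i)) (velocity : ∀ i, motive (velocityIdx i))
    (r : Fin (2 * n)) : motive r := by
  rcases Nat.mod_two_eq_zero_or_one r with hr | hr
  · convert spacing ⟨r / 2, by omega⟩ using 1
    exact Fin.ext (by simp only [spacingIdx]; omega)
  · convert velocity ⟨r / 2, by omega⟩ using 1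
    exact Fin.ext (by simp only [velocityIdx]; omega)

theorem fin2_two_mul (j : ℕ) : fin2 (2 * j) = 0 := by
  simp [fin2]

theorem fin2_two_mul_add_one (j : ℕ) : fin2 (2 * j + 1) = 1 := by
  ext; simp [fin2]

theorem trafficA_apply_spacingIdx (r : Fin (2 * n)) (i : Fin n) :
    trafficA n m ι α1 α2 α3 r (spacingIdx i) =
      if (r : ℕ) = 2 * i + 1 then (if IsCAV ι i then 0 else α1) else 0 := by
  induction r using spacingIdx_velocityIdx_cases with
  | spacing j =>
    have hne : ¬ 2 * (j : ℕ) = 2 * i + 1 := by omega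
    simp [trafficA, spacingIdx, fin2_two_mul, matP1, matP2, matS1, matS2, hne]
  | velocity j =>
    have hdiv (k : ℕ) : (2 * k + 1) / 2 = k := by omega
    by_cases hji : (j : ℕ) = i <;>
      simp [trafficA, spacingIdx, velocityIdx, fin2_two_mul, fin2_two_mul_add_one, matP1, matP2,
        matS1, matS2, hdiv, hji]

theorem trafficA_apply_velocityIdx (r : Fin (2 * n)) (i : Fin n) :
    trafficA n m ι α1 α2 α3 r (velocityIdx i) =
      (if (r : ℕ) = 2 * i then -1 else 0)
      + (if (r : ℕ) = 2 * i + 1 then (if IsCAV ι i then 0 else -α2) else 0)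
      + (if (r : ℕ) = 2 * (i + 1) then 1 else 0)
      + (if (r : ℕ) = 2 * (i + 1) + 1 then (if IsCAV ι (i + 1) then 0 else α3) else 0) := by
  have hdiv (k : ℕ) : (2 * k + 1) / 2 = k := by omega
  have hodd (k l : ℕ) : ¬ 2 * k = 2 * l + 1 := by omega
  have heven (k l : ℕ) : ¬ 2 * k + 1 = 2 * l := by omega
  induction r using spacingIdx_velocityIdx_cases with
  | spacing j =>
    by_cases hji : (j : ℕ) = i
    · simp [trafficA, spacingIdx, velocityIdx, fin2_two_mul, fin2_two_mul_add_one, matP1, matS1,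
        hdiv, hodd, hji]
    · by_cases hjs : (j : ℕ) = i + 1 <;>
        simp [trafficA, spacingIdx, velocityIdx, fin2_two_mul, fin2_two_mul_add_one, matP2, matS2,
          hdiv, hodd, hji, hjs]
  | velocity j =>
    by_cases hji : (j : ℕ) = i
    · simp [trafficA, velocityIdx, fin2_two_mul_add_one, matP1, matS1, hdiv, heven, hji]
    · by_cases hjs : (j : ℕ) = i + 1 <;>
        simp [trafficA, velocityIdx, fin2_two_mul_add_one, matP2, matS2, hdiv, heven, hji, hjs]

theorem vecMul_trafficBhat_zero {R : Type*} [CommRing R] (f : ℝ →+* R) (w : Fin (2 * n) → R) :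
    (w ᵥ* (trafficBhat n m ι α3).map f) 0 = zeroExtend w 0 + f α3 * zeroExtend w 1 := by
  have hentry (r : Fin (2 * n)) : f (trafficBhat n m ι α3 r 0) =
      (if (r : ℕ) = 0 then 1 else 0) + (if (r : ℕ) = 1 then f α3 else 0) := by
    simp only [trafficBhat, of_apply, Fin.val_zero, reduceDIte]
    split_ifs <;> first | omega | simp
  simp only [vecMul, dotProduct, map_apply, hentry, mul_add, Finset.sum_add_distrib,
    sum_mul_ite_val_eq, mul_one, mul_comm (f α3)]

theorem vecMul_trafficBhat_succ {R : Type*} [CommRing R] (f : ℝ →+* R) (w : Fin (2 * n) → R)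
    (k : Fin m) :
    (w ᵥ* (trafficBhat n m ι α3).map f) k.succ = zeroExtend w (2 * ι k + 1) := by
  simp only [vecMul, dotProduct, map_apply, trafficBhat, of_apply, Fin.val_succ,
    Nat.succ_ne_zero, dite_false, Nat.add_sub_cancel, Fin.eta, apply_ite f, map_one, map_zero,
    sum_mul_ite_val_eq, mul_one]

section FeedbackInvariance

variable {R : Type*} [CommRing R] {f : ℝ →+* R} {w : Fin (2 * n) → R}

theorem zeroExtend_mul_ite_isCAV (hw : ∀ k, zeroExtend w (2 * ι k + 1) = 0) (i : ℕ) (x : R) :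
    zeroExtend w (2 * i + 1) * (if IsCAV ι i then 0 else x) = x * zeroExtend w (2 * i + 1) := by
  split_ifs with hi
  · obtain ⟨k, rfl⟩ := hi
    rw [hw k, mul_zero, mul_zero]
  · exact mul_comm _ _

theorem vecMul_trafficA_spacingIdx (hw : ∀ k, zeroExtend w (2 * ι k + 1) = 0) (i : Fin n) :
    (w ᵥ* (trafficA n m ι α1 α2 α3).map f) (spacingIdx i) =
      f α1 * zeroExtend w (2 * i + 1) := by
  simp only [vecMul, dotProduct, map_apply, trafficA_apply_spacingIdx, apply_ite f, map_zero,
    sum_mul_ite_val_eq, zeroExtend_mul_ite_isCAV hw]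

theorem vecMul_trafficA_velocityIdx (hw : ∀ k, zeroExtend w (2 * ι k + 1) = 0) (i : Fin n) :
    (w ᵥ* (trafficA n m ι α1 α2 α3).map f) (velocityIdx i) =
      zeroExtend w (2 * (i + 1)) + f α3 * zeroExtend w (2 * (i + 1) + 1)
        - zeroExtend w (2 * i) - f α2 * zeroExtend w (2 * i + 1) := by
  simp only [vecMul, dotProduct, map_apply, trafficA_apply_velocityIdx, map_add, apply_ite f,
    map_zero, map_one, map_neg, mul_add (w _), Finset.sum_add_distrib, sum_mul_ite_val_eq,
    zeroExtend_mul_ite_isCAV hw]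
  ring

end FeedbackInvariance

theorem isChainMode_of_vecMul_eq_smul {K : Type*} [Field K] {f : ℝ →+* K} {μ : K}
    {w : Fin (2 * n) → K} (hA : w ᵥ* (trafficA n m ι α1 α2 α3).map f = μ • w)
    (hB : w ᵥ* (trafficBhat n m ι α3).map f = 0) :
    IsChainMode n (f α1) (f α2) (f α3) μ
      (fun i => zeroExtend w (2 * i)) (fun i => zeroExtend w (2 * i + 1)) := by
  have hw (k : Fin m) : zeroExtend w (2 * ι k + 1) = 0 := by
    rw [← vecMul_trafficBhat_succ f (α3 := α3), hB, Pi.zero_apply]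
  have heigen (r : Fin (2 * n)) :
      (w ᵥ* (trafficA n m ι α1 α2 α3).map f) r = μ * zeroExtend w r := by
    rw [hA, zeroExtend_val, Pi.smul_apply, smul_eq_mul]
  exact
    { head := (vecMul_trafficBhat_zero f w).symm.trans (congrFun hB 0)
      spacing := fun i hi =>
        (vecMul_trafficA_spacingIdx hw ⟨i, hi⟩).symm.trans (heigen (spacingIdx ⟨i, hi⟩))
      velocity := fun i hi =>
        (vecMul_trafficA_velocityIdx hw ⟨i, hi⟩).symm.trans (heigen (velocityIdx ⟨i, hi⟩))
      tail := by
        rw [zeroExtend_of_le w le_rfl, zeroExtend_of_le w (Nat.le_succ _), mul_zero, add_zero] }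

theorem rank_ctrbMat_trafficA_trafficBhat (hα1 : α1 ≠ 0) (hcond : α1 - α2 * α3 + α3 ^ 2 ≠ 0) :
    (ctrbMat (trafficA n m ι α1 α2 α3) (trafficBhat n m ι α3)).rank = 2 * n := by
  refine rank_ctrbMat_of_hautus fun μ w hA hB => funext fun r => ?_
  have hzero := (isChainMode_of_vecMul_eq_smul hA hB).eq_zero
    ((map_ne_zero Complex.ofRealHom).mpr hα1)
    (by simpa only [map_sub, map_add, map_mul, map_pow] using
      (map_ne_zero Complex.ofRealHom).mpr hcond)
  rw [← zeroExtend_val w r]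
  induction r using spacingIdx_velocityIdx_cases with
  | spacing i => exact (hzero i i.isLt).1
  | velocity i => exact (hzero i i.isLt).2

theorem trafficC_mulVec_castAdd (x : Fin (2 * n) → ℝ) (i : Fin n) :
    (trafficC n m ι *ᵥ x) (Fin.castAdd m i) = x (velocityIdx i) := by
  simp only [mulVec, dotProduct, trafficC, of_apply, Fin.val_castAdd, i.isLt, dite_true,
    mul_comm _ (x _), sum_mul_ite_val_eq, mul_one]
  exact zeroExtend_val x (velocityIdx i)

theorem trafficC_mulVec_natAdd (x : Fin (2 * n) → ℝ) (k : Fin m) :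
    (trafficC n m ι *ᵥ x) (Fin.natAdd n k) = x (spacingIdx (ι k)) := by
  simp only [mulVec, dotProduct, trafficC, of_apply, Fin.val_natAdd, Nat.not_lt.mpr le_self_add,
    dite_false, Nat.add_sub_cancel_left, Fin.eta, mul_comm _ (x _), sum_mul_ite_val_eq, mul_one]
  exact zeroExtend_val x (spacingIdx (ι k))

theorem trafficA_mulVec_velocityIdx {x : Fin (2 * n) → ℝ} (hx : ∀ i, x (velocityIdx i) = 0)
    {i : Fin n} (hi : ¬ IsCAV ι i) :
    (trafficA n m ι α1 α2 α3 *ᵥ x) (velocityIdx i) = α1 * x (spacingIdx i) := by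
  rw [mulVec, dotProduct, Fintype.sum_eq_single (spacingIdx i), trafficA_apply_spacingIdx,
    velocityIdx, if_pos rfl, if_neg hi]
  intro c hc
  induction c using spacingIdx_velocityIdx_cases with
  | spacing j =>
    have hij : ¬ (velocityIdx i : ℕ) = 2 * j + 1 := fun h =>
      hc (congrArg spacingIdx (Fin.ext (by simp only [velocityIdx] at h; omega)))
    rw [trafficA_apply_spacingIdx, if_neg hij, zero_mul]
  | velocity j => rw [hx j, mul_zero]

theorem rank_obsvMat_trafficA_trafficC (hα1 : α1 ≠ 0) :
    (obsvMat (trafficA n m ι α1 α2 α3) (trafficC n m ι)).rank = 2 * n := by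
  refine rank_obsvMat_of_mulVec_pow_eq_zero fun x hx => funext fun r => ?_
  have hn : 0 < 2 * n := r.pos
  have hCx : trafficC n m ι *ᵥ x = 0 := by simpa using hx 0 hn
  have hCAx : trafficC n m ι *ᵥ (trafficA n m ι α1 α2 α3 *ᵥ x) = 0 := by
    simpa using hx 1 (by omega)
  have hvel (i : Fin n) : x (velocityIdx i) = 0 :=
    (trafficC_mulVec_castAdd x i).symm.trans (congrFun hCx _)
  induction r using spacingIdx_velocityIdx_cases with
  | spacing i =>
    by_cases hi : IsCAV ι i
    · obtain ⟨k, hk⟩ := hi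
      rw [← Fin.ext hk]
      exact (trafficC_mulVec_natAdd x k).symm.trans (congrFun hCx _)
    · have hacc : α1 * x (spacingIdx i) = 0 := by
        rw [← trafficA_mulVec_velocityIdx hvel hi]
        exact (trafficC_mulVec_castAdd _ i).symm.trans (congrFun hCAx _)
      exact (mul_eq_zero.mp hacc).resolve_left hα1
  | velocity i => exact hvel i

end Traffic

theorem mixed_traffic_combined_controllable_and_observable_general (n m : ℕ) (ι : Fin m → Fin n)
    (α1 α2 α3 : ℝ) (hα1 : α1 ≠ 0) (hcond : α1 - α2 * α3 + α3 ^ 2 ≠ 0) :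
    (ctrbMat (trafficA n m ι α1 α2 α3) (trafficBhat n m ι α3)).rank = 2 * n ∧
      (obsvMat (trafficA n m ι α1 α2 α3) (trafficC n m ι)).rank = 2 * n :=
  ⟨rank_ctrbMat_trafficA_trafficBhat hα1 hcond, rank_obsvMat_trafficA_trafficC hα1⟩

/-- **Corollary 1.** If `α₁ − α₂α₃ + α₃² ≠ 0`, the reformulated mixed-traffic system
`(A, B̂, C)` with combined input matrix `B̂ = [H, B]` is controllable and observable. -/
theorem mixed_traffic_combined_controllable_and_observable
    (n m : ℕ) (hn : 1 ≤ n) (hm : 1 ≤ m) (hmn : m ≤ n)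
    (ι : Fin m → Fin n) (hmono : StrictMono ι)
    (α1 α2 α3 : ℝ) (hα1 : 0 < α1) (hα3 : 0 < α3) (hα23 : α3 < α2)
    (hcond : α1 - α2 * α3 + α3 ^ 2 ≠ 0) :
    (ctrbMat (trafficA n m ι α1 α2 α3) (trafficBhat n m ι α3)).rank = 2 * n ∧
      (obsvMat (trafficA n m ι α1 α2 α3) (trafficC n m ι)).rank = 2 * n := by
  exact mixed_traffic_combined_controllable_and_observable_general n m ι α1 α2 α3 hα1.ne' hcond
end
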